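/- arXiv:1201.4995 — 7 statements merged into one kernel-verified Lean document; each statement's English description precedes it below -/
import Mathlib

section
/- Let G be a finite simple 3-regular graph on vertex set V, let v ∈ V, and let G' be the pendant extension of G at v, with new vertex u. Then G' contains a trail that starts at v, ends at u, and visits every vertex of G' if and only if G has a Hamiltonian cycle. (This is the combinatorial core of Metatheorem 1: location traversal plus single-use paths encode Hamiltonian Cycle.) -/
/-!
The new vertex `u` has degree one, so a trail from `v` to `u` uses the edge `vu` exactly once, as
its last edge (`exists_pendantLift_eq`); deleting it leaves a closed trail of `G` based at `v` that visits
every vertex. Conversely, a Hamiltonian cycle rotated to start at `v` extends to `u` by that edge.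

A closed trail enters and leaves a vertex `x` once for every occurrence of `x` in the tail of its
support, so it uses twice that many edges at `x` (`countP_edges_add`). As `x` has only three edges
and a trail repeats none, it occurs at most once: a closed trail in a `3`-regular graph is a cycle.
-/

/-- The pendant extension of `G` at `v`: add one new vertex `u = Sum.inr ()`
adjacent to `v` and to no other vertex. -/
def pendantExtension {V : Type*} (G : SimpleGraph V) (v : V) : SimpleGraph (V ⊕ Unit) :=
  SimpleGraph.fromRel (fun x y =>
    (∃ a b, x = Sum.inl a ∧ y = Sum.inl b ∧ G.Adj a b) ∨
    (x = Sum.inl v ∧ y = Sum.inr ()))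

open SimpleGraph

theorem pendantExtension_adj_inl {V : Type*} {G : SimpleGraph V} {v a b : V} :
    (pendantExtension G v).Adj (Sum.inl a) (Sum.inl b) ↔ G.Adj a b := by
  constructor
  · simp only [pendantExtension, SimpleGraph.fromRel_adj]
    rintro ⟨-, (⟨a', b', h1, h2, h⟩ | ⟨-, h⟩) | (⟨a', b', h1, h2, h⟩ | ⟨-, h⟩)⟩
    · cases h1; cases h2; exact h
    · cases h
    · cases h1; cases h2; exact h.symm
    · cases h
  · intro h
    simp only [pendantExtension, SimpleGraph.fromRel_adj]
    exact ⟨fun e => h.ne (Sum.inl.inj e), Or.inl (Or.inl ⟨a, b, rfl, rfl, h⟩)⟩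

theorem pendantExtension_adj_inr {V : Type*} {G : SimpleGraph V} {v : V} {x : V ⊕ Unit} :
    (pendantExtension G v).Adj (Sum.inr ()) x ↔ x = Sum.inl v := by
  simp only [pendantExtension, SimpleGraph.fromRel_adj]
  constructor
  · rintro ⟨-, (⟨a', b', h1, h2, h⟩ | ⟨h, -⟩) | (⟨a', b', h1, h2, h⟩ | ⟨h, -⟩)⟩
    · cases h1
    · cases h
    · cases h2
    · exact h
  · rintro rfl
    exact ⟨by simp, by simp⟩

/-- The inclusion of `G` into its pendant extension. -/
def pendantInl {V : Type*} (G : SimpleGraph V) (v : V) : G →g pendantExtension G v where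
  toFun := Sum.inl
  map_rel' h := pendantExtension_adj_inl.2 h

/-- The image of a walk of `G` in the pendant extension. It is `Walk.map` along `pendantInl`, with
the endpoints written as `Sum.inl a` and `Sum.inl b`. -/
def pendantLift {V : Type*} {G : SimpleGraph V} (v : V) {a b : V} (q : G.Walk a b) :
    (pendantExtension G v).Walk (Sum.inl a) (Sum.inl b) := q.map (pendantInl G v)

theorem support_pendantLift {V : Type*} {G : SimpleGraph V} (v : V) {a b : V} (q : G.Walk a b) :
    (pendantLift v q).support = q.support.map Sum.inl := Walk.support_map _ _

theorem isTrail_pendantLift {V : Type*} {G : SimpleGraph V} (v : V) {a b : V} (q : G.Walk a b) :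
    (pendantLift v q).IsTrail ↔ q.IsTrail :=
  Walk.isTrail_map_iff_of_injective (f := pendantInl G v) Sum.inl_injective

/-- A walk of the pendant extension between old vertices that avoids the pendant edge
comes from a walk of `G`. -/
theorem exists_pendantLift_eq {V : Type*} {G : SimpleGraph V} {v a b : V}
    (p : (pendantExtension G v).Walk (Sum.inl a) (Sum.inl b))
    (hp : s(Sum.inr (), Sum.inl v) ∉ p.edges) :
    ∃ q : G.Walk a b, pendantLift v q = p := by
  -- the endpoints are generalized so that the induction on the walk applies
  suffices H : ∀ (x y : V ⊕ Unit) (p : (pendantExtension G v).Walk x y) (a b : V)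
      (hx : Sum.inl a = x) (hy : Sum.inl b = y), s(Sum.inr (), Sum.inl v) ∉ p.edges →
      ∃ q : G.Walk a b, (pendantLift v q).copy hx hy = p from H _ _ p a b rfl rfl hp
  clear hp p a b
  intro x y p
  induction p with
  | nil =>
    rintro a b rfl hy -
    cases hy
    exact ⟨.nil, rfl⟩
  | @cons x z y h p ih =>
    rintro a b rfl rfl hp
    rw [Walk.edges_cons, List.mem_cons, not_or] at hp
    rcases z with c | ⟨⟩
    · obtain ⟨q, hq⟩ := ih c b rfl rfl hp.2
      refine ⟨.cons (pendantExtension_adj_inl.1 h) q, ?_⟩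
      subst hq
      rfl
    · refine absurd ?_ hp.1
      rw [pendantExtension_adj_inr.1 h.symm, Sym2.eq_swap]

/-- Each occurrence of `x` in a walk accounts for two of the edges of the walk at `x`,
except that an occurrence at either end misses one. -/
theorem countP_edges_add {V : Type*} [DecidableEq V] {G : SimpleGraph V} {a b : V}
    (p : G.Walk a b) (x : V) :
    p.edges.countP (x ∈ ·) + (if a = x then 1 else 0) + (if b = x then 1 else 0) =
      2 * p.support.count x := by
  induction p with
  | nil => simp only [Walk.edges_nil, Walk.support_nil, List.countP_nil, List.count_singleton,
      beq_iff_eq]; split_ifs <;> rfl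
  | @cons a c b h p ih =>
    have hne := h.ne
    have key : (if x ∈ s(a, c) then 1 else 0) =
        (if a = x then 1 else 0) + (if c = x then 1 else 0) := by
      by_cases h1 : a = x
      · subst h1; simp [hne.symm]
      · by_cases h2 : c = x
        · subst h2; simp [hne]
        · simp [Sym2.mem_iff, h1, h2, Ne.symm h1, Ne.symm h2]
    simp only [Walk.edges_cons, Walk.support_cons, List.countP_cons, List.count_cons,
      beq_iff_eq, decide_eq_true_eq]
    omega

/-- A trail uses at most `deg x` edges at `x`. -/
theorem countP_edges_le_degree {V : Type*} [Fintype V] [DecidableEq V] {G : SimpleGraph V}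
    [DecidableRel G.Adj] {a b : V} {p : G.Walk a b} (hp : p.IsTrail) (x : V) :
    p.edges.countP (x ∈ ·) ≤ G.degree x := by
  rw [List.countP_eq_length_filter, ← List.toFinset_card_of_nodup (hp.edges_nodup.filter _),
    ← G.card_incidenceFinset_eq_degree]
  refine Finset.card_le_card fun e he => ?_
  simp only [List.mem_toFinset, List.mem_filter, decide_eq_true_eq] at he
  rw [mem_incidenceFinset]
  exact ⟨p.edges_subset_edgeSet he.1, he.2⟩

theorem count_tail_le_one {V : Type*} [Fintype V] [DecidableEq V] {G : SimpleGraph V}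
    [DecidableRel G.Adj] (hreg : ∀ w : V, G.degree w = 3) {a : V} {p : G.Walk a a}
    (hp : p.IsTrail) (x : V) : p.support.tail.count x ≤ 1 := by
  have h1 := countP_edges_add p x
  have h2 := countP_edges_le_degree hp x
  rw [hreg] at h2
  rw [← Walk.cons_tail_support, List.count_cons] at h1
  simp only [beq_iff_eq] at h1
  split_ifs at h1 <;> omega

theorem stmt_0 {V : Type*} [Fintype V] [DecidableEq V] (G : SimpleGraph V)
    [DecidableRel G.Adj] (hreg : ∀ w : V, G.degree w = 3) (v : V) :
    (∃ W : (pendantExtension G v).Walk (Sum.inl v) (Sum.inr ()),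
        W.IsTrail ∧ ∀ x : V ⊕ Unit, x ∈ W.support) ↔
    (∃ (x : V) (c : G.Walk x x), c.IsHamiltonianCycle) := by
  constructor
  · rintro ⟨W, hW, hall⟩
    have hR : W.reverse.IsTrail := hW.reverse
    have hallR : ∀ x, x ∈ W.reverse.support := fun x => by simpa using hall x
    generalize W.reverse = R at hR hallR
    cases R with
    | @cons _ z _ h p =>
      obtain rfl := pendantExtension_adj_inr.1 h
      rw [Walk.isTrail_cons] at hR
      obtain ⟨q, rfl⟩ := exists_pendantLift_eq p hR.2
      have hq : q.IsTrail := (isTrail_pendantLift v q).1 hR.1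
      have hqall : ∀ x, x ∈ q.support := fun x => by
        have := hallR (Sum.inl x)
        rw [Walk.support_cons, List.mem_cons, support_pendantLift, List.mem_map] at this
        obtain h | ⟨y, hy, hyx⟩ := this
        · cases h
        · cases hyx; exact hy
      -- `v` has a neighbour, which is visited, so the closed trail is not trivial
      have hnil : q ≠ .nil := by
        rintro rfl
        obtain ⟨w, hw⟩ := (G.degree_pos_iff_exists_adj v).1 (by rw [hreg]; norm_num)
        have := hqall w
        simp only [Walk.support_nil, List.mem_singleton] at this
        exact hw.ne this.symm
      have hcyc : q.IsCycle :=
        { isCircuit := ⟨hq, hnil⟩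
          support_nodup := List.nodup_iff_count_le_one.2 (count_tail_le_one hreg hq) }
      refine ⟨v, q, (Walk.isHamiltonianCycle_iff_isCycle_and_support_count_tail_eq_one).2
        ⟨hcyc, fun x => le_antisymm (count_tail_le_one hreg hq x) ?_⟩⟩
      rw [Nat.one_le_iff_ne_zero, ← Nat.pos_iff_ne_zero, List.count_pos_iff]
      obtain h | h := (Walk.mem_support_iff q).1 (hqall x)
      · subst h
        exact Walk.end_mem_tail_support (fun h => hnil h.eq_nil)
      · exact h
  · rintro ⟨x, c, hc⟩
    have hv := hc.mem_support v
    let q := c.rotate v hv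
    have hq : q.IsTrail := (hc.isCycle.rotate hv).isTrail
    have hadj : (pendantExtension G v).Adj (Sum.inr ()) (Sum.inl v) :=
      pendantExtension_adj_inr.2 rfl
    refine ⟨(Walk.cons hadj (pendantLift v q)).reverse, Walk.IsTrail.reverse _ ?_, ?_⟩
    · rw [Walk.isTrail_cons]
      refine ⟨(isTrail_pendantLift v q).2 hq, fun h => ?_⟩
      have := Walk.fst_mem_support_of_mem_edges _ h
      rw [support_pendantLift, List.mem_map] at this
      obtain ⟨y, -, hy⟩ := this
      cases hy
    · intro y
      rw [Walk.support_reverse, List.mem_reverse, Walk.support_cons, List.mem_cons,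
        support_pendantLift, List.mem_map]
      rcases y with y | ⟨⟩
      · exact Or.inr ⟨y, (Walk.mem_support_rotate_iff _ _ hv).2 (hc.mem_support y), rfl⟩
      · exact Or.inl rfl
end

section
/- Let G be a finite simple 3-regular graph on vertex set V, let v ∈ V, and let G' be the pendant extension of G at v, with new vertex u. If W is a trail in G' from v to u that visits every vertex of G', then u occurs exactly once in the vertex sequence of W, v occurs exactly twice, and every other vertex of G occurs exactly once. (This is the structural claim in the proof of Metatheorem 1: every location except the starting one is visited exactly once.) -/
theorem pendantExtension_adj_inl_inl {V : Type*} (G : SimpleGraph V) (v a b : V) :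
    (pendantExtension G v).Adj (Sum.inl a) (Sum.inl b) ↔ G.Adj a b := by
  simp only [pendantExtension, SimpleGraph.fromRel_adj]
  constructor
  · rintro ⟨-, (⟨a', b', h1, h2, h⟩ | ⟨-, h⟩) | (⟨a', b', h1, h2, h⟩ | ⟨-, h⟩)⟩
    · cases h1; cases h2; exact h
    · cases h
    · cases h1; cases h2; exact h.symm
    · cases h
  · intro h
    exact ⟨fun e => h.ne (Sum.inl.inj e), Or.inl (Or.inl ⟨a, b, rfl, rfl, h⟩)⟩

theorem eq_of_pendantExtension_adj_inr {V : Type*} (G : SimpleGraph V) (v : V) {x : V ⊕ Unit}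
    (h : (pendantExtension G v).Adj x (Sum.inr ())) : x = Sum.inl v := by
  simp only [pendantExtension, SimpleGraph.fromRel_adj] at h
  obtain ⟨-, (⟨a, b, -, h, -⟩ | ⟨h, -⟩) | (⟨a, b, h, -⟩ | ⟨h, -⟩)⟩ := h
  · cases h
  · exact h
  · cases h
  · cases h

/-- The componentwise Boolean equality on `V ⊕ W`, which `List.count` uses on a sum type, is
lawful. -/
theorem sum_lawfulBEq {V W : Type*} [BEq V] [BEq W] [LawfulBEq V] [LawfulBEq W] :
    LawfulBEq (V ⊕ W) where
  eq_of_beq {a b} h := by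
    rcases a with a | a <;> rcases b with b | b
    · exact congrArg Sum.inl (eq_of_beq (a := a) (b := b) h)
    · cases h
    · cases h
    · exact congrArg Sum.inr (eq_of_beq (a := a) (b := b) h)
  rfl {a} := by
    rcases a with a | a
    · exact beq_self_eq_true a
    · exact beq_self_eq_true a

/-- Every occurrence of `x` in the support has an edge on either side, except that one edge is
missing at the start and one at the end of the walk. -/
theorem countP_edges_add_endpoints {U : Type*} [DecidableEq U] [BEq U] [LawfulBEq U]
    {H : SimpleGraph U} (x : U) {a b : U} (p : H.Walk a b) :
    p.edges.countP (fun e => x ∈ e) + (if a = x then 1 else 0) + (if b = x then 1 else 0)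
      = 2 * p.support.count x := by
  induction p with
  | nil => simp only [SimpleGraph.Walk.edges_nil, SimpleGraph.Walk.support_nil,
      List.countP_nil, List.count_singleton, beq_iff_eq]; split_ifs <;> rfl
  | @cons a c b h p ih =>
    have hne := h.ne
    simp only [SimpleGraph.Walk.edges_cons, SimpleGraph.Walk.support_cons, List.countP_cons,
      List.count_cons, Sym2.mem_iff, decide_eq_true_eq, beq_iff_eq]
    grind

/-- A trail uses at most `deg x` edges at `x`. The degree is replaced by the size of a finite set
`S` containing the neighbours of `x`, so that no finiteness or decidability of `H` is needed. -/
theorem countP_edges_le_card {U : Type*} [DecidableEq U] {H : SimpleGraph U} {a b : U}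
    {p : H.Walk a b} (hp : p.IsTrail) (x : U) (S : Finset U) (hS : ∀ y, H.Adj x y → y ∈ S) :
    p.edges.countP (fun e => x ∈ e) ≤ S.card := by
  rw [List.countP_eq_length_filter, ← List.toFinset_card_of_nodup (hp.edges_nodup.filter _)]
  refine (Finset.card_le_card (t := S.image fun y => s(x, y)) ?_).trans Finset.card_image_le
  intro e he
  simp only [List.mem_toFinset, List.mem_filter, decide_eq_true_eq] at he
  obtain ⟨he, y, rfl⟩ := he
  exact Finset.mem_image_of_mem _ (hS y (p.adj_of_mem_edges he))

/-- A walk that ends in the new vertex and avoids `v` stays in the new vertex. -/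
theorem eq_new_of_walk_avoiding {V : Type*} (G : SimpleGraph V) (v : V) {z t : V ⊕ Unit}
    (p : (pendantExtension G v).Walk z t) (ht : t = Sum.inr ())
    (hv : Sum.inl v ∉ p.support) : ∀ y ∈ p.support, y = Sum.inr () := by
  induction p with
  | nil => simpa using ht
  | cons h q ih =>
    simp only [SimpleGraph.Walk.support_cons, List.mem_cons, not_or] at hv
    have hc := ih ht hv.2 _ q.start_mem_support
    rw [hc] at h
    exact absurd (eq_of_pendantExtension_adj_inr G v h).symm hv.1

theorem stmt_1 {V : Type*} [Fintype V] [DecidableEq V] (G : SimpleGraph V)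
    [DecidableRel G.Adj] (hreg : ∀ w : V, G.degree w = 3) (v : V)
    (W : (pendantExtension G v).Walk (Sum.inl v) (Sum.inr ()))
    (htrail : W.IsTrail) (hvisit : ∀ x : V ⊕ Unit, x ∈ W.support) :
    W.support.count (Sum.inr ()) = 1 ∧
    W.support.count (Sum.inl v) = 2 ∧
    ∀ w : V, w ≠ v → W.support.count (Sum.inl w) = 1 := by
  have := sum_lawfulBEq (V := V) (W := Unit)
  have hpos : ∀ x, 0 < W.support.count x := fun x => List.count_pos_iff.2 (hvisit x)
  refine ⟨?_, ?_, fun w hw => ?_⟩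
  · have h1 := countP_edges_add_endpoints (Sum.inr ()) W
    have h2 := countP_edges_le_card htrail (Sum.inr ()) {Sum.inl v}
      (fun y hy => Finset.mem_singleton.2 (eq_of_pendantExtension_adj_inr G v hy.symm))
    have h3 := hpos (Sum.inr ())
    simp only [reduceCtorEq, if_true, if_false, Finset.card_singleton] at h1 h2
    omega
  · have h1 := countP_edges_add_endpoints (Sum.inl v) W
    have h2 := countP_edges_le_card htrail (Sum.inl v)
      (insert (Sum.inr ()) ((G.neighborFinset v).image Sum.inl)) (by
        rintro (y | ⟨⟩) hy
        · simpa using (pendantExtension_adj_inl_inl G v v y).1 hy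
        · simp)
    have h3 := (Finset.card_insert_le (Sum.inr ()) ((G.neighborFinset v).image Sum.inl)).trans
      (Nat.add_le_add_right (Finset.card_image_le (f := (Sum.inl : V → V ⊕ Unit))) 1)
    rw [SimpleGraph.card_neighborFinset_eq_degree, hreg] at h3
    -- If `v` occurred only as the start, the rest of the walk would avoid `v`.
    have h4 : 2 ≤ W.support.count (Sum.inl v) := by
      obtain ⟨w, hw⟩ : (G.neighborFinset v).Nonempty := by
        rw [← Finset.card_pos, SimpleGraph.card_neighborFinset_eq_degree, hreg]; norm_num
      rw [SimpleGraph.mem_neighborFinset] at hw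
      cases W with
      | cons h p =>
        by_contra hlt
        rw [SimpleGraph.Walk.support_cons, List.count_cons_self] at hlt
        have hv : Sum.inl v ∉ p.support := List.count_eq_zero.1 (by omega)
        have hmem := hvisit (Sum.inl w)
        rw [SimpleGraph.Walk.support_cons, List.mem_cons] at hmem
        rcases hmem with e | hmem
        · exact hw.ne (Sum.inl.inj e).symm
        · cases eq_new_of_walk_avoiding G v p rfl hv _ hmem
    simp only [reduceCtorEq, if_true, if_false] at h1
    omega
  · have h1 := countP_edges_add_endpoints (Sum.inl w) W
    have h2 := countP_edges_le_card htrail (Sum.inl w) ((G.neighborFinset w).image Sum.inl) (by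
        rintro (y | ⟨⟩) hy
        · simpa using (pendantExtension_adj_inl_inl G v w y).1 hy
        · exact absurd (Sum.inl.inj (eq_of_pendantExtension_adj_inr G v hy)) hw)
    have h3 := Finset.card_image_le (s := G.neighborFinset w) (f := (Sum.inl : V → V ⊕ Unit))
    rw [SimpleGraph.card_neighborFinset_eq_degree, hreg] at h3
    have h4 := hpos (Sum.inl w)
    have h5 : (Sum.inl v : V ⊕ Unit) ≠ Sum.inl w := fun e => hw (Sum.inl.inj e).symm
    simp only [reduceCtorEq, if_neg h5, if_false] at h1
    omega
end

section
/- Let G be a finite simple graph on n vertices with n ≥ 3, let v be a vertex of G, and let W be a closed walk at v of length exactly n that visits every vertex of G. Then W is a Hamiltonian cycle of G; in particular, every vertex of G other than v occurs exactly once in the vertex sequence of W, and all n traversed edges are distinct. (This is the equality case of the counting bound used in the proofs of Metatheorems 1b and 1c.) -/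
/-!
A closed walk at `v` of length `n` has support `v :: t` with `t.length = n`. Since the walk is not
nil, `v` also occurs at its end, that is, in `t`, so `t` lists all `n` vertices in `n` entries and
hence has no repetitions. Thus the tail of the walk is a path, and a closed walk of length at least
`3` whose tail is a path is a cycle (`isCycle_iff_isPath_tail_and_le_length`). A cycle of length `n`
is Hamiltonian, which gives the two remaining claims.
-/

theorem stmt_8 {V : Type*} [Fintype V] [DecidableEq V] (G : SimpleGraph V)
    (hn : 3 ≤ Fintype.card V) (v : V) (W : G.Walk v v)
    (hlen : W.length = Fintype.card V)
    (hvisit : ∀ x : V, x ∈ W.support) :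
    W.IsHamiltonianCycle ∧
    (∀ w : V, w ≠ v → W.support.count w = 1) ∧
    W.edges.Nodup := by
  have hnil : ¬ W.Nil := by
    rw [← SimpleGraph.Walk.length_eq_zero_iff]
    omega
  have hmem : ∀ x : V, x ∈ W.tail.support := fun x => by
    have hx := hvisit x
    rw [← SimpleGraph.Walk.cons_support_tail hnil, List.mem_cons] at hx
    rcases hx with rfl | hx
    · exact W.tail.end_mem_support
    · exact hx
  have hlenTail : W.tail.support.length = Fintype.card V := by
    rw [SimpleGraph.Walk.length_support, SimpleGraph.Walk.length_tail_add_one hnil, hlen]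
  have hnodup : W.tail.support.Nodup := by
    rw [← Multiset.coe_nodup, ← Multiset.toFinset_card_eq_card_iff_nodup]
    have huniv : (W.tail.support : Multiset V).toFinset = Finset.univ :=
      Finset.eq_univ_iff_forall.mpr fun x => by simpa using hmem x
    rw [huniv, Multiset.coe_card, hlenTail, Finset.card_univ]
  have hcycle : W.IsCycle :=
    SimpleGraph.Walk.isCycle_iff_isPath_tail_and_le_length.mpr
      ⟨SimpleGraph.Walk.IsPath.mk' hnodup, hlen ▸ hn⟩
  have hham : W.IsHamiltonianCycle :=
    SimpleGraph.Walk.isHamiltonianCycle_iff_isCycle_and_length_eq.mpr ⟨hcycle, hlen⟩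
  exact ⟨hham, fun w hw => hham.support_count_of_ne hw.symm, hcycle.edges_nodup⟩
end

section
/- Let A : V → V → Prop be a digraph on a finite vertex type V, and let W be a closed directed walk at some vertex v of length at least 1. Then the number of distinct arcs used by W is at least the number of distinct vertices visited by W. (This is the double-counting bound in the proof of Metatheorem 1c: every visited location requires opening at least one outgoing door, and distinct locations yield distinct doors.) -/
/-! Each visited vertex is the tail of some arc of the walk: a vertex occurring before the last
position is followed by another one, and the last vertex equals the first, which has a successor
because the length is at least 1. So the visited vertices lie in the image of the set of used arcs
under the first projection, and an image is no larger than the set it comes from. -/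

theorem stmt_10 {V : Type*} [Fintype V] [DecidableEq V] (A : V → V → Prop)
    (v : V) (ℓ : List V) (hchain : ℓ.Chain' A)
    (hhead : ℓ.head? = some v) (hlast : ℓ.getLast? = some v)
    (hlen : 2 ≤ ℓ.length) :
    ℓ.toFinset.card ≤ (ℓ.zip ℓ.tail).toFinset.card := by
  have key : ∀ i (hi : i + 1 < ℓ.length), (ℓ[i], ℓ[i + 1]) ∈ ℓ.zip ℓ.tail := by
    intro i hi
    rw [List.mem_iff_getElem]
    refine ⟨i, by simp; omega, by simp⟩
  have hsub : ℓ.toFinset ⊆ (ℓ.zip ℓ.tail).toFinset.image Prod.fst := by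
    intro x hx
    rw [List.mem_toFinset, List.mem_iff_getElem] at hx
    obtain ⟨i, hi, rfl⟩ := hx
    rw [Finset.mem_image]
    by_cases h : i + 1 < ℓ.length
    · exact ⟨_, List.mem_toFinset.2 (key i h), rfl⟩
    · refine ⟨_, List.mem_toFinset.2 (key 0 (by omega)), ?_⟩
      -- here `i` is the last position, so both entries equal `v`
      obtain rfl : i = ℓ.length - 1 := by omega
      rw [List.head?_eq_getElem?, List.getElem?_eq_some_iff] at hhead
      rw [List.getLast?_eq_getElem?, List.getElem?_eq_some_iff] at hlast
      exact hhead.2.trans hlast.2.symm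
  exact (Finset.card_le_card hsub).trans Finset.card_image_le
end

section
/- Let A : V → V → Prop be a digraph on a finite vertex type V with |V| = n ≥ 2. Then there exists a closed directed walk of length at least 1 at some vertex v that visits every vertex of V and uses at most n distinct arcs if and only if the digraph has a directed Hamiltonian cycle. (This is the key-counting core of Metatheorem 1c.b: with exactly n keys, the avatar can open the n doors needed to visit all locations and return exactly when a directed Hamiltonian cycle exists.) -/
/-!
A closed walk visiting every vertex leaves every vertex, so the set `S` of arcs it uses contains,
for each vertex `x`, some arc `(x, f x)`. These `n` arcs are distinct; if `S` has at most `n`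
elements, they are all of `S`. Hence the walk is forced to be the orbit `v, f v, f (f v), …` of its
starting vertex, which is a periodic point of `f` because the walk is closed. As the walk visits
every vertex, one minimal period of this orbit enumerates all vertices without repetition, and it
is a directed Hamiltonian cycle. Conversely, a Hamiltonian cycle followed by its first vertex is a
closed walk with exactly `n` consecutive pairs.
-/

/-- A directed Hamiltonian cycle of the digraph `A`: an enumeration of all
vertices, each exactly once, with consecutive pairs (and the wrap-around pair)
being arcs. -/
def DirectedHamiltonianCycle {V : Type*} [Fintype V] (A : V → V → Prop) : Prop :=
  ∃ (e : List V) (h : e ≠ []), e.Nodup ∧ (∀ x : V, x ∈ e) ∧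
    e.Chain' A ∧ A (e.getLast h) (e.head h)

theorem mem_zip_tail_of_lt {V : Type*} (ℓ : List V) (i : ℕ) (h : i + 1 < ℓ.length) :
    (ℓ[i], ℓ[i + 1]) ∈ ℓ.zip ℓ.tail := by
  rw [List.mem_iff_getElem]
  exact ⟨i, by simp; omega, by simp⟩

/-- In a closed walk of positive length, every visited vertex is the source of a used arc. -/
theorem exists_arc_from {V : Type*} {v : V} {ℓ : List V} (hh : ℓ.head? = some v)
    (hl : ℓ.getLast? = some v) (h2 : 2 ≤ ℓ.length) {x : V} (hx : x ∈ ℓ) :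
    ∃ y, (x, y) ∈ ℓ.zip ℓ.tail := by
  obtain ⟨i, hi, rfl⟩ := List.mem_iff_getElem.1 hx
  by_cases h : i + 1 < ℓ.length
  · exact ⟨_, mem_zip_tail_of_lt ℓ i h⟩
  -- The last vertex is also the first one, and the walk leaves it along its first arc.
  · have hi' : i = ℓ.length - 1 := by omega
    subst hi'
    have h0 : ℓ[0] = v := by
      rw [List.head?_eq_getElem?, List.getElem?_eq_getElem (by omega)] at hh
      exact Option.some.inj hh
    have h1 : ℓ[ℓ.length - 1] = v := by
      rw [List.getLast?_eq_getElem?, List.getElem?_eq_getElem (by omega)] at hl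
      exact Option.some.inj hl
    refine ⟨ℓ[1], ?_⟩
    rw [h1, ← h0]
    exact mem_zip_tail_of_lt ℓ 0 (by omega)

/-- An orbit of a self-map along arcs, through a periodic point and covering all vertices, gives a
Hamiltonian cycle. -/
theorem hamiltonian_of_orbit {V : Type*} [Fintype V] (A : V → V → Prop) (f : V → V) (v : V)
    (hA : ∀ x, A x (f x)) (hv : v ∈ Function.periodicPts f) (hc : ∀ x, ∃ k, f^[k] v = x) :
    DirectedHamiltonianCycle A := by
  have hp := Function.minimalPeriod_pos_of_mem_periodicPts hv
  have hper := Function.iterate_minimalPeriod (f := f) (x := v)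
  set p := Function.minimalPeriod f v with hpdef
  have hne : (List.range p).map (fun k => f^[k] v) ≠ [] := by
    simp; omega
  refine ⟨(List.range p).map (fun k => f^[k] v), hne, ?_, ?_, ?_, ?_⟩
  · refine List.Nodup.map_on ?_ List.nodup_range
    intro a ha b hb hab
    exact Function.iterate_injOn_Iio_minimalPeriod (List.mem_range.1 ha) (List.mem_range.1 hb) hab
  · intro x
    obtain ⟨k, rfl⟩ := hc x
    rw [List.mem_map]
    exact ⟨k % p, List.mem_range.2 (Nat.mod_lt _ hp), Function.iterate_mod_minimalPeriod_eq⟩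
  · change List.IsChain A _
    rw [List.isChain_iff_getElem]
    intro i hi
    simp only [List.getElem_map, List.getElem_range, Function.iterate_succ_apply']
    exact hA _
  · have h := hA (f^[p - 1] v)
    rw [← Function.iterate_succ_apply' f, Nat.succ_eq_add_one, Nat.sub_add_cancel hp, hper] at h
    simpa [List.getLast_eq_getElem, List.head_eq_getElem] using h

theorem stmt_11 {V : Type*} [Fintype V] [DecidableEq V] (A : V → V → Prop)
    (hn : 2 ≤ Fintype.card V) :
    (∃ (v : V) (ℓ : List V), ℓ.head? = some v ∧ ℓ.getLast? = some v ∧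
        ℓ.Chain' A ∧ 2 ≤ ℓ.length ∧ (∀ x : V, x ∈ ℓ) ∧
        (ℓ.zip ℓ.tail).toFinset.card ≤ Fintype.card V) ↔
    DirectedHamiltonianCycle A := by
  constructor
  · rintro ⟨v, ℓ, hh, hl, hA, h2, hall, hcard⟩
    choose f hf using fun x => exists_arc_from hh hl h2 (hall x)
    have hinj : Function.Injective fun x => (x, f x) := fun a b h => congrArg Prod.fst h
    -- The `n` arcs `(x, f x)` exhaust the used arcs.
    have hS : Finset.univ.image (fun x => (x, f x)) = (ℓ.zip ℓ.tail).toFinset := by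
      apply Finset.eq_of_subset_of_card_le
      · intro a ha
        obtain ⟨x, -, rfl⟩ := Finset.mem_image.1 ha
        exact List.mem_toFinset.2 (hf x)
      · rwa [Finset.card_image_of_injective _ hinj, Finset.card_univ]
    have hstep : ∀ i (h : i + 1 < ℓ.length), ℓ[i + 1] = f ℓ[i] := by
      intro i h
      have := List.mem_toFinset.2 (mem_zip_tail_of_lt ℓ i h)
      rw [← hS] at this
      obtain ⟨x, -, hx⟩ := Finset.mem_image.1 this
      rw [Prod.mk.injEq] at hx
      rw [← hx.1, hx.2]
    have horb : ∀ i (h : i < ℓ.length), f^[i] v = ℓ[i] := by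
      intro i
      induction i with
      | zero =>
        intro h
        rw [List.head?_eq_getElem?, List.getElem?_eq_getElem h] at hh
        exact (Option.some.inj hh).symm
      | succ i ih =>
        intro h
        rw [Function.iterate_succ_apply', ih (by omega), hstep i h]
    apply hamiltonian_of_orbit A f v
    · intro x
      obtain ⟨i, hi, hx⟩ := List.mem_iff_getElem.1 (hf x)
      simp only [List.getElem_zip, List.getElem_tail, Prod.mk.injEq] at hx
      rw [← hx.2]
      nth_rewrite 1 [← hx.1]
      exact List.isChain_iff_getElem.1 hA i (by simp at hi; omega)
    · refine ⟨ℓ.length - 1, by omega, ?_⟩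
      rw [List.getLast?_eq_getElem?, List.getElem?_eq_getElem (by omega)] at hl
      exact (horb _ (by omega)).trans (Option.some.inj hl)
    · intro x
      obtain ⟨i, hi, rfl⟩ := List.mem_iff_getElem.1 (hall x)
      exact ⟨i, horb i hi⟩
  · rintro ⟨e, h, hnd, hall, hA, hlast⟩
    have hlen : e.length = Fintype.card V := by
      rw [← List.toFinset_card_of_nodup hnd, ← Finset.card_univ]
      congr 1
      ext x
      simp [hall x]
    refine ⟨e.head h, e ++ [e.head h], ?_, by simp, ?_, by simp; omega, by simp [hall], ?_⟩
    · simp [List.head?_append, List.head?_eq_some_head h]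
    · change List.IsChain A _
      refine List.IsChain.append hA (by simp) ?_
      intro x hx y hy
      rw [List.getLast?_eq_some_getLast h] at hx
      simp at hx hy
      subst hx hy
      exact hlast
    · refine (List.toFinset_card_le _).trans ?_
      simp [hlen]
end

section
/- Let A : V → V → Prop be a digraph on a finite vertex type V, and let W be a closed directed walk at a vertex v of length at least 1 that visits exactly k distinct vertices and uses exactly k distinct arcs. Then there is an enumeration w₀, …, w_{k−1} of the k visited vertices, each exactly once and with w₀ = v, such that the arcs used by W are exactly (w₀, w₁), …, (w_{k−2}, w_{k−1}), (w_{k−1}, w₀); that is, the used arcs form a single directed cycle through the visited vertices. (This is the equality case of the key-counting argument in the proof of Metatheorem 1c.c: exactly k doors are opened if and only if a directed cycle of the graph is followed.) -/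
/-!
Every visited vertex is the tail of a used arc, because the walk is closed and has positive length.
So the tail map from used arcs to visited vertices is surjective, and since both sets have `k`
elements it is injective: each visited vertex has exactly one used out-arc. Let `f` be the resulting
successor function. The walk is then `v, f v, f (f v), …`, hence `v` is a periodic point of `f`,
and the list `v, f v, …, f^[p - 1] v`, with `p` the minimal period of `v`, is the required cycle.
-/

/-- The used arcs of a list are the pairs of entries in consecutive positions. -/
lemma mem_arcs_iff {V : Type*} (ℓ : List V) (x y : V) :
    (x, y) ∈ ℓ.zip ℓ.tail ↔ ∃ i, ℓ[i]? = some x ∧ ℓ[i + 1]? = some y := by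
  rw [List.mem_iff_getElem?]
  simp [List.getElem?_zip_eq_some]

/-- The first `p` iterates of `f` at `v`, where `p` is the minimal period of `v`. -/
noncomputable def orbitList {V : Type*} (f : V → V) (v : V) : List V :=
  (List.range (Function.minimalPeriod f v)).map (fun i => f^[i] v)

lemma orbitList_nodup {V : Type*} (f : V → V) (v : V) : (orbitList f v).Nodup := by
  refine List.Nodup.map_on ?_ List.nodup_range
  intro i hi j hj h
  rw [List.mem_range] at hi hj
  exact (Function.iterate_eq_iterate_iff_of_lt_minimalPeriod hi hj).1 h

lemma orbitList_rotate {V : Type*} (f : V → V) (v : V) :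
    (orbitList f v).rotate 1 = (orbitList f v).map f := by
  apply List.ext_getElem
  · simp
  · intro i h1 h2
    have e : (orbitList f v).length = Function.minimalPeriod f v := by simp [orbitList]
    rw [List.getElem_rotate]
    simp only [e]
    simp only [orbitList, List.getElem_map, List.getElem_range]
    rw [Function.iterate_mod_minimalPeriod_eq, Function.iterate_succ_apply']

theorem stmt_12 {V : Type*} [Fintype V] [DecidableEq V] (A : V → V → Prop)
    (v : V) (k : ℕ) (ℓ : List V)
    (hhead : ℓ.head? = some v) (hlast : ℓ.getLast? = some v)
    (hchain : ℓ.Chain' A) (hlen : 2 ≤ ℓ.length)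
    (hvert : ℓ.toFinset.card = k)
    (harc : (ℓ.zip ℓ.tail).toFinset.card = k) :
    ∃ w : List V, w.Nodup ∧ w.length = k ∧ w.head? = some v ∧
      w.toFinset = ℓ.toFinset ∧
      (ℓ.zip ℓ.tail).toFinset = (w.zip (w.rotate 1)).toFinset := by
  obtain ⟨n, hn⟩ : ∃ n, ℓ.length = n + 1 := ⟨ℓ.length - 1, by omega⟩
  have hn0 : 0 < n := by omega
  have h0 : ℓ[0]? = some v := by rw [← List.head?_eq_getElem?, hhead]
  have hnv : ℓ[n]? = some v := by
    rw [List.getLast?_eq_getElem?, hn] at hlast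
    simpa using hlast
  have get : ∀ i, i ≤ n → ∃ x, ℓ[i]? = some x := fun i hi =>
    ⟨ℓ[i], List.getElem?_eq_getElem (by omega)⟩
  have out : ∀ x ∈ ℓ, ∃ y, (x, y) ∈ ℓ.zip ℓ.tail := by
    intro x hx
    obtain ⟨i, hi⟩ := List.mem_iff_getElem?.1 hx
    have hil : i < ℓ.length := (List.getElem?_eq_some_iff.1 hi).1
    rcases Nat.lt_or_ge i n with h | h
    · obtain ⟨y, hy⟩ := get (i + 1) h
      exact ⟨y, (mem_arcs_iff _ _ _).2 ⟨i, hi, hy⟩⟩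
    · -- The last vertex equals the first one, which the first arc leaves.
      obtain rfl : i = n := by omega
      obtain ⟨y, hy⟩ := get 1 hn0
      exact ⟨y, (mem_arcs_iff _ _ _).2 ⟨0, by rw [h0, ← hnv, hi], hy⟩⟩
  have himg : (ℓ.zip ℓ.tail).toFinset.image Prod.fst = ℓ.toFinset := by
    ext x
    simp only [Finset.mem_image, List.mem_toFinset]
    constructor
    · rintro ⟨⟨a, b⟩, h, rfl⟩
      exact (List.of_mem_zip h).1
    · intro hx
      obtain ⟨y, hy⟩ := out x hx
      exact ⟨_, hy, rfl⟩
  have hinj : Set.InjOn Prod.fst ((ℓ.zip ℓ.tail).toFinset : Set (V × V)) :=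
    Finset.card_image_iff.1 (by rw [himg, hvert, harc])
  have out' : ∀ x, ∃ y, x ∈ ℓ → (x, y) ∈ ℓ.zip ℓ.tail := by
    intro x
    by_cases hx : x ∈ ℓ
    · obtain ⟨y, hy⟩ := out x hx
      exact ⟨y, fun _ => hy⟩
    · exact ⟨x, fun h => absurd h hx⟩
  choose f hf using out'
  have harcs : ∀ x y, (x, y) ∈ ℓ.zip ℓ.tail ↔ x ∈ ℓ ∧ y = f x := by
    intro x y
    constructor
    · intro h
      have hx := (List.of_mem_zip h).1
      refine ⟨hx, ?_⟩
      have : (x, y) = (x, f x) := hinj (by simpa using h) (by simpa using hf x hx) rfl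
      exact (Prod.mk.inj this).2
    · rintro ⟨hx, rfl⟩
      exact hf x hx
  have hit : ∀ i, i ≤ n → ℓ[i]? = some (f^[i] v) := by
    intro i
    induction i with
    | zero => intro _; simpa using h0
    | succ i ih =>
      intro hi
      obtain ⟨y, hy⟩ := get (i + 1) hi
      have := ((harcs _ _).1 ((mem_arcs_iff _ _ _).2 ⟨i, ih (by omega), hy⟩)).2
      rw [hy, this, Function.iterate_succ_apply']
  have hper : Function.IsPeriodicPt f n v := by
    have := hit n le_rfl
    rw [hnv] at this
    exact (Option.some.inj this).symm
  have hp0 := hper.minimalPeriod_pos hn0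
  have hpn := hper.minimalPeriod_le hn0
  have hset : (orbitList f v).toFinset = ℓ.toFinset := by
    ext x
    simp only [List.mem_toFinset, orbitList, List.mem_map, List.mem_range]
    constructor
    · rintro ⟨i, hi, rfl⟩
      exact List.mem_iff_getElem?.2 ⟨i, hit i (by omega)⟩
    · intro hx
      obtain ⟨i, hi⟩ := List.mem_iff_getElem?.1 hx
      have hil : i < ℓ.length := (List.getElem?_eq_some_iff.1 hi).1
      rw [hit i (by omega)] at hi
      exact ⟨i % Function.minimalPeriod f v, Nat.mod_lt _ hp0, by
        rw [Function.iterate_mod_minimalPeriod_eq]; exact Option.some.inj hi⟩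
  refine ⟨orbitList f v, orbitList_nodup f v, ?_, ?_, hset, ?_⟩
  · rw [← List.toFinset_card_of_nodup (orbitList_nodup f v), hset, hvert]
  · rw [List.head?_eq_getElem?]
    simp [orbitList, hp0]
  · rw [orbitList_rotate]
    ext ⟨x, y⟩
    have hx : x ∈ orbitList f v ↔ x ∈ ℓ := by
      rw [← List.mem_toFinset, hset, List.mem_toFinset]
    rw [List.mem_toFinset, List.mem_toFinset, harcs, ← hx]
    have e : (orbitList f v).zip ((orbitList f v).map f)
        = (orbitList f v).map (fun x => (x, f x)) := by
      rw [List.zip_map_right, List.zip_eq_zipWith, List.zipWith_self, List.map_map]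
      rfl
    rw [e, List.mem_map]
    constructor
    · rintro ⟨h, rfl⟩
      exact ⟨x, h, rfl⟩
    · rintro ⟨a, h, e⟩
      cases e
      exact ⟨h, rfl⟩
end

section
/- Let A : V → V → Prop be a digraph on a finite vertex type V with |V| = n ≥ 2, let v ∈ V, and extend the digraph to the vertex type V ⊕ Unit by adding one new vertex u with exactly one additional arc, namely (v, u), so that u has no other incoming arcs and no outgoing arcs. Then the extended digraph contains a directed walk from v to u that visits every vertex of V ⊕ Unit and uses at most n+1 distinct arcs if and only if the original digraph has a directed Hamiltonian cycle. (This is the combinatorial core of the reduction in Metatheorem 1c: the final location u, reachable only through v, forces the avatar to follow a directed Hamiltonian cycle before exiting.) -/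
/-- Extend a digraph on `V` to `V ⊕ Unit` by adding the single arc `(v, u)`,
where `u = Sum.inr ()` is the new vertex, which has no other incoming arcs
and no outgoing arcs. -/
def pendantDigraph {V : Type*} (A : V → V → Prop) (v : V) :
    V ⊕ Unit → V ⊕ Unit → Prop
  | Sum.inl a, Sum.inl b => A a b
  | Sum.inl a, Sum.inr _ => a = v
  | Sum.inr _, _ => False

theorem mem_zip_tail_iff {α : Type*} (l : List α) (a b : α) :
    (a, b) ∈ l.zip l.tail ↔ ∃ i, l[i]? = some a ∧ l[i + 1]? = some b := by
  simp [List.mem_iff_getElem?, List.getElem?_zip_eq_some]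

/-- If every arc `(x, f x)` is in `A` and the forward orbit of `v` under `f` returns to `v` and covers
all vertices, then one period of that orbit is a Hamiltonian cycle. -/
theorem hamiltonian_of_periodic {V : Type*} [Fintype V] (A : V → V → Prop) (f : V → V) (v : V)
    (hA : ∀ x, A x (f x)) (hper : ∃ k, 0 < k ∧ f^[k] v = v) (hsurj : ∀ x, ∃ i, f^[i] v = x) :
    DirectedHamiltonianCycle A := by
  obtain ⟨k, hk, hkv⟩ := hper
  have hp : v ∈ Function.periodicPts f := ⟨k, hk, hkv⟩
  have hm := Function.minimalPeriod_pos_of_mem_periodicPts hp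
  have hv : f^[Function.minimalPeriod f v] v = v := Function.iterate_minimalPeriod
  have hnd := Function.nodup_periodicOrbit (f := f) (x := v)
  have hmem : ∀ x, x ∈ Function.periodicOrbit f v := fun x =>
    (Function.mem_periodicOrbit_iff hp).2 (hsurj x)
  rw [Function.periodicOrbit] at hnd hmem
  refine ⟨(List.range (Function.minimalPeriod f v)).map (fun n => f^[n] v), ?_,
    by simpa using hnd, fun x => by simpa using hmem x, ?_, ?_⟩
  · simp [hm.ne']
  · refine List.isChain_iff_getElem.2 ?_
    intro i hi
    simp only [List.getElem_map, List.getElem_range, Function.iterate_succ_apply']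
    exact hA _
  · simp only [List.getLast_map, List.getLast_range, List.head_map, List.head_range,
      Function.iterate_zero, id]
    have h := hA (f^[Function.minimalPeriod f v - 1] v)
    rwa [← Function.iterate_succ_apply' f, Nat.succ_eq_add_one, Nat.sub_add_cancel hm, hv] at h

/-- A set of at most `n + 1` arcs which contains `(v, u)` and an arc inside `V` out of every vertex
of `V` contains exactly one arc inside `V` out of every vertex. -/
theorem exists_succ_function {V : Type*} [Fintype V] [DecidableEq V] (v : V)
    (S : Finset ((V ⊕ Unit) × (V ⊕ Unit))) (hS : S.card ≤ Fintype.card V + 1)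
    (hu : (Sum.inl v, Sum.inr ()) ∈ S) (hout : ∀ x : V, ∃ y : V, (Sum.inl x, Sum.inl y) ∈ S) :
    ∃ f : V → V, ∀ x y : V, (Sum.inl x, Sum.inl y) ∈ S ↔ y = f x := by
  choose f hf using hout
  let g : V → (V ⊕ Unit) × (V ⊕ Unit) := fun x => (Sum.inl x, Sum.inl (f x))
  have hg : Function.Injective g := fun x y h => by
    simpa [g] using congrArg Prod.fst h
  let T := insert ((Sum.inl v : V ⊕ Unit), (Sum.inr () : V ⊕ Unit)) (Finset.univ.image g)
  have hT : T.card = Fintype.card V + 1 := by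
    rw [Finset.card_insert_of_notMem (by simp [g]), Finset.card_image_of_injective _ hg,
      Finset.card_univ]
  have hTS : T ⊆ S := by
    intro p hp
    simp only [T, Finset.mem_insert, Finset.mem_image, Finset.mem_univ, true_and] at hp
    rcases hp with rfl | ⟨x, rfl⟩
    · exact hu
    · exact hf x
  have hEq : T = S := Finset.eq_of_subset_of_card_le hTS (by omega)
  refine ⟨f, fun x y => ?_⟩
  rw [← hEq]
  simp [T, g, eq_comm]

theorem hamiltonian_of_walk {V : Type*} [Fintype V] [DecidableEq V] (A : V → V → Prop)
    (hn : 2 ≤ Fintype.card V) (v : V) (l : List (V ⊕ Unit))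
    (hhead : l.head? = some (Sum.inl v)) (hlast : l.getLast? = some (Sum.inr ()))
    (hch : l.IsChain (pendantDigraph A v)) (hall : ∀ x, x ∈ l)
    (hcard : (l.zip l.tail).toFinset.card ≤ Fintype.card V + 1) :
    DirectedHamiltonianCycle A := by
  have harc : ∀ i a b, l[i]? = some a → l[i + 1]? = some b → pendantDigraph A v a b := by
    intro i a b ha hb
    rw [List.isChain_iff_getElem] at hch
    obtain ⟨h1, rfl⟩ := List.getElem?_eq_some_iff.1 ha
    obtain ⟨h2, rfl⟩ := List.getElem?_eq_some_iff.1 hb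
    exact hch i h2
  rw [List.head?_eq_getElem?] at hhead
  rw [List.getLast?_eq_getElem?] at hlast
  -- The walk meets `u` only at its end, so an earlier step starts in `V`.
  have hinl : ∀ i, i + 1 < l.length → ∃ x : V, l[i]? = some (Sum.inl x) := by
    intro i hi
    have h1 : l[i]? = some l[i] := List.getElem?_eq_getElem (by omega)
    have h2 : l[i + 1]? = some l[i + 1] := List.getElem?_eq_getElem hi
    have h3 := harc i _ _ h1 h2
    rcases h : l[i] with x | x
    · exact ⟨x, by rw [h1, h]⟩
    · rw [h] at h3
      exact h3.elim
  have hocc : ∀ x : V, ∃ i, i + 1 < l.length ∧ l[i]? = some (Sum.inl x) := by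
    intro x
    obtain ⟨i, hi⟩ := List.mem_iff_getElem?.1 (hall (Sum.inl x))
    obtain ⟨h, -⟩ := List.getElem?_eq_some_iff.1 hi
    refine ⟨i, ?_, hi⟩
    by_contra hc
    have : i = l.length - 1 := by omega
    rw [this, hlast] at hi
    simp at hi
  have hL : 3 ≤ l.length := by
    have : Nontrivial V := Fintype.one_lt_card_iff_nontrivial.1 hn
    obtain ⟨x, hx⟩ := exists_ne v
    obtain ⟨i, hi, hix⟩ := hocc x
    by_contra hc
    have : i = 0 := by omega
    rw [this, hhead] at hix
    simp at hix
    exact hx hix.symm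
  have hpen : l[l.length - 2]? = some (Sum.inl v) := by
    obtain ⟨x, hx⟩ := hinl (l.length - 2) (by omega)
    have h := harc (l.length - 2) _ _ hx
      (by rw [show l.length - 2 + 1 = l.length - 1 by omega]; exact hlast)
    have h' : x = v := h
    rw [hx, h']
  have hmem : ∀ a b, (a, b) ∈ (l.zip l.tail).toFinset ↔
      ∃ i, l[i]? = some a ∧ l[i + 1]? = some b := fun a b => by
    rw [List.mem_toFinset, mem_zip_tail_iff]
  obtain ⟨f, hf⟩ := exists_succ_function v _ hcard
    ((hmem _ _).2 ⟨l.length - 2, hpen, by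
      rw [show l.length - 2 + 1 = l.length - 1 by omega]; exact hlast⟩)
    (by
      intro x
      obtain ⟨i, hi, hix⟩ := hocc x
      by_cases h : i + 2 < l.length
      · obtain ⟨y, hy⟩ := hinl (i + 1) h
        exact ⟨y, (hmem _ _).2 ⟨i, hix, hy⟩⟩
      · -- The penultimate vertex is `v`, which has a successor in `V` at the start of the walk.
        have hi2 : i = l.length - 2 := by omega
        rw [hi2, hpen] at hix
        obtain ⟨y, hy⟩ := hinl 1 (by omega)
        exact ⟨y, (hmem _ _).2 ⟨0, hhead.trans hix, hy⟩⟩)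
  have hiter : ∀ i, i + 1 < l.length → l[i]? = some (Sum.inl (f^[i] v)) := by
    intro i
    induction i with
    | zero => intro _; simpa using hhead
    | succ i ih =>
      intro hi
      obtain ⟨y, hy⟩ := hinl (i + 1) hi
      have := (hf _ y).1 ((hmem _ _).2 ⟨i, ih (by omega), hy⟩)
      rw [hy, this, Function.iterate_succ_apply']
  refine hamiltonian_of_periodic A f v (fun x => ?_) ⟨l.length - 2, by omega, ?_⟩ (fun x => ?_)
  · obtain ⟨i, h1, h2⟩ := (hmem _ _).1 ((hf x _).2 rfl)
    exact harc i _ _ h1 h2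
  · have := hiter (l.length - 2) (by omega)
    rw [hpen] at this
    simpa using this.symm
  · obtain ⟨i, hi, hix⟩ := hocc x
    have := hiter i hi
    rw [hix] at this
    exact ⟨i, by simpa using this.symm⟩

/-- A Hamiltonian cycle can be cut open at any vertex `v`: what remains is a list `r` with
`v, r, v` a closed walk. -/
theorem exists_closed_walk {V : Type*} [Fintype V] (A : V → V → Prop)
    (h : DirectedHamiltonianCycle A) (v : V) :
    ∃ r : List V, (v :: r).Nodup ∧ (∀ x, x ∈ v :: r) ∧ (v :: (r ++ [v])).IsChain A := by
  obtain ⟨e, he, hnd, hall, hch, hwrap⟩ := h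
  obtain ⟨s, t, rfl⟩ := List.append_of_mem (hall v)
  have hperm : (s ++ v :: t).Perm (v :: (t ++ s)) := by
    simpa using List.perm_append_comm (l₁ := s) (l₂ := v :: t)
  refine ⟨t ++ s, hperm.nodup_iff.1 hnd, fun x => hperm.mem_iff.1 (hall x), ?_⟩
  have hch' : (s ++ v :: t).IsChain A := hch
  cases s with
  | nil =>
    rw [List.append_nil, ← List.cons_append, List.isChain_append]
    refine ⟨by simpa using hch', by simp, ?_⟩
    intro x hx y hy
    simp at hy hwrap
    rw [List.getLast?_eq_some_getLast (by simp)] at hx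
    simp at hx
    rw [← hx, ← hy]
    exact hwrap
  | cons a s =>
    have h1 : ((a :: s) ++ [v]).IsChain A := by
      have : (((a :: s) ++ [v]) ++ t).IsChain A := by simpa using hch'
      exact (List.isChain_append.1 this).1
    have h2 : (v :: t).IsChain A := (List.isChain_append.1 hch').2.1
    have : (v :: (t ++ (a :: s) ++ [v])) = (v :: t) ++ ((a :: s) ++ [v]) := by simp
    rw [this, List.isChain_append]
    refine ⟨h2, h1, ?_⟩
    intro x hx y hy
    rw [List.getLast?_eq_some_getLast (by simp)] at hx
    simp at hx hy hwrap
    rw [← hx, ← hy]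
    exact hwrap

theorem stmt_13 {V : Type*} [Fintype V] [DecidableEq V] (A : V → V → Prop)
    (hn : 2 ≤ Fintype.card V) (v : V) :
    (∃ ℓ : List (V ⊕ Unit), ℓ.head? = some (Sum.inl v) ∧
        ℓ.getLast? = some (Sum.inr ()) ∧ ℓ.Chain' (pendantDigraph A v) ∧
        (∀ x : V ⊕ Unit, x ∈ ℓ) ∧
        (ℓ.zip ℓ.tail).toFinset.card ≤ Fintype.card V + 1) ↔
    DirectedHamiltonianCycle A := by
  constructor
  · rintro ⟨l, h1, h2, h3, h4, h5⟩
    exact hamiltonian_of_walk A hn v l h1 h2 h3 h4 h5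
  · intro h
    obtain ⟨r, hnd, hall, hch⟩ := exists_closed_walk A h v
    have hlen : r.length + 1 ≤ Fintype.card V := by simpa using hnd.length_le_card
    refine ⟨(v :: (r ++ [v])).map Sum.inl ++ [Sum.inr ()], by simp,
      List.getLast?_concat, ?_, ?_, ?_⟩
    · refine List.isChain_append.2 ⟨?_, by simp, ?_⟩
      · rw [List.isChain_map]
        exact hch
      · intro x hx y hy
        rw [← List.cons_append, List.map_append] at hx
        simp only [List.map_cons, List.map_nil, List.getLast?_concat, Option.mem_def,
          Option.some.injEq, List.head?_cons] at hx hy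
        subst hx hy
        rfl
    · rintro (x | x)
      · have := hall x
        simp only [List.mem_cons] at this
        simp
        tauto
      · simp
    · refine (List.toFinset_card_le _).trans ?_
      simp
      omega
end
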